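/- Let (G, 𝓐) be a local convergence pairing on a Peano continuum X without cut points and let A, B ∈ 𝓐. If (g_i) ⊆ st(A) acts as a convergence sequence on A with attractor p and repeller n, and A ∩ B ≠ ∅, then there exists a subsequence (h_i) of (g_i) such that for every compact C ⊆ B \ {n} and every open neighborhood U of p, h_i(C) ⊆ U for all sufficiently large i. -/

import Mathlib

open Set Filter Topology Pointwise

/-- The set `E` separates the points `x` and `y`: both lie outside `E` and in
different connected components of the complement of `E`. -/
def SepPts {X : Type*} [TopologicalSpace X] (E : Set X) (x y : X) : Prop :=
  x ∉ E ∧ y ∉ E ∧ connectedComponentIn Eᶜ x ≠ connectedComponentIn Eᶜ y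

/-- The set `E` separates the set `Y ⊆ X \ E`: two points of `Y` lie in different
connected components of the complement of `E`. -/
def SepSet {X : Type*} [TopologicalSpace X] (E Y : Set X) : Prop :=
  Y ⊆ Eᶜ ∧ ∃ x ∈ Y, ∃ y ∈ Y, connectedComponentIn Eᶜ x ≠ connectedComponentIn Eᶜ y

/-- Two (closed) sets `A` and `B` cross: they intersect, or each separates the other. -/
def Crosses {X : Type*} [TopologicalSpace X] (A B : Set X) : Prop :=
  (A ∩ B).Nonempty ∨ (SepSet A B ∧ SepSet B A)

/-- There is a (finite) crossing sequence in `𝓐` from `A` to `B`. -/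
def CrossSeqFromTo {X : Type*} [TopologicalSpace X] (𝓐 : Set (Set X)) (A B : Set X) : Prop :=
  ∃ (n : ℕ) (c : ℕ → Set X), c 0 = A ∧ c n = B ∧ (∀ i ≤ n, c i ∈ 𝓐) ∧
    ∀ i < n, Crosses (c i) (c (i + 1))

/-- A collection `𝓐` is cross-connected: any two of its elements are joined by a
crossing sequence in `𝓐`. -/
def CrossConnected {X : Type*} [TopologicalSpace X] (𝓐 : Set (Set X)) : Prop :=
  ∀ A ∈ 𝓐, ∀ B ∈ 𝓐, CrossSeqFromTo 𝓐 A B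

/-- There is a crossing sequence `A, A_1, …, A_n, B` in `𝓐` (with `n ≥ 1`) whose
intermediate terms `A_1, …, A_n` are disjoint from `D`. -/
def CrossSeqAvoiding {X : Type*} [TopologicalSpace X] (𝓐 : Set (Set X)) (A B D : Set X) :
    Prop :=
  ∃ n : ℕ, 1 ≤ n ∧ ∃ c : ℕ → Set X, c 0 = A ∧ c (n + 1) = B ∧ (∀ i ≤ n + 1, c i ∈ 𝓐) ∧
    (∀ i ≤ n, Crosses (c i) (c (i + 1))) ∧ ∀ i, 1 ≤ i → i ≤ n → c i ∩ D = ∅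

/-- A collection of subsets of a metric space is null if for every `ε > 0` only finitely
many of its members have diameter greater than `ε`. -/
def NullFam {X : Type*} [PseudoMetricSpace X] (𝓐 : Set (Set X)) : Prop :=
  ∀ ε : ℝ, 0 < ε → {A ∈ 𝓐 | ε < Metric.diam A}.Finite

/-- A collection `𝓐` is fine if any two distinct points are separated by the union of
some finite subcollection of `𝓐`. -/
def FineFam {X : Type*} [PseudoMetricSpace X] (𝓐 : Set (Set X)) : Prop :=
  ∀ x y : X, x ≠ y → ∃ 𝓑 ⊆ 𝓐, 𝓑.Finite ∧ SepPts (⋃₀ 𝓑) x y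

/-- A sequence of maps `T i : X → X` acts as a convergence sequence on the subset `A`,
with repeller `n ∈ A` and attractor `p ∈ A`: for every compact `C ⊆ A \ {n}` and every
open neighborhood `U` of `p`, eventually `T i '' C ⊆ U`. -/
def ConvSeqOn {X : Type*} [TopologicalSpace X] (A : Set X) (T : ℕ → X → X) (n p : X) :
    Prop :=
  n ∈ A ∧ p ∈ A ∧ ∀ C : Set X, C ⊆ A → IsCompact C → n ∉ C →
    ∀ U : Set X, IsOpen U → p ∈ U → ∀ᶠ i in atTop, T i '' C ⊆ U

/-- The stabilizer of a subset `A ⊆ X` in `G`. -/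
def stab (G : Type*) {X : Type*} [Group G] [MulAction G X] (A : Set X) : Set G :=
  {g : G | g • A = A}

/-- The subset `S` of the group `G` acts as a convergence group on `A ⊆ X`: every
sequence of distinct elements of `S` has a subsequence acting as a convergence
sequence on `A`. -/
def ConvGroupOn {G X : Type*} [Group G] [MulAction G X] [TopologicalSpace X]
    (S : Set G) (A : Set X) : Prop :=
  ∀ g : ℕ → G, (∀ i, g i ∈ S) → Function.Injective g →
    ∃ k : ℕ → ℕ, StrictMono k ∧ ∃ n p : X,
      ConvSeqOn A (fun i => (g (k i) • · : X → X)) n p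

/-- `(G, 𝓐)` is a local convergence pairing on `X`. -/
structure IsLocalConvPairing (G : Type*) {X : Type*} [Group G] [MulAction G X]
    [MetricSpace X] (𝓐 : Set (Set X)) : Prop where
  closed : ∀ A ∈ 𝓐, IsClosed A
  invariant : ∀ g : G, ∀ A ∈ 𝓐, g • A ∈ 𝓐
  big : ∀ A ∈ 𝓐, 2 < A.encard
  null : NullFam 𝓐
  fine : FineFam 𝓐
  stabConv : ∀ A ∈ 𝓐, ConvGroupOn (stab G A) A
  connect : ∀ A ∈ 𝓐, ∀ B ∈ 𝓐, (A ∩ B).encard ≤ 2 →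
    (∀ c : X, A ∩ B = {c} → ∀ b ∈ B, b ≠ c → CrossSeqAvoiding 𝓐 A B {b, c}) ∧
    ((¬ ∃ c : X, A ∩ B = {c}) → CrossSeqAvoiding 𝓐 A B (A ∩ B))

/-! Translates of a member of a null family that keep coming close to `p` shrink to `p`, unless
one and the same set through `p` recurs among them. In a locally connected space, translates of
`E` do come close to `p` as soon as `E` crosses a member whose translates shrink to `p`, or
crosses `A` and misses the repeller: either a point of `E` or two points separated by `E` are
carried to `p`. Hence shrinking propagates along crossing sequences.

If a sequence converges on two intersecting members `A` and `B` and stabilizes both, then the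
attractors agree and, passing to inverses, so do the repellers. This is immediate if `A ∩ B` has
three points. If it has two, it contains all attractors and repellers, and the last term of a
crossing sequence from `A` to `B` avoiding `A ∩ B` shrinks to both attractors. If `A ∩ B = {c}`,
then `c` is both attractors: otherwise ping-pong produces a loxodromic element with fixed points
`c` and `r ≠ c` in `B`, and shrinking to `r` along a crossing sequence from `B` to `A` avoiding
`{r, c}` puts `r` into `A`.

If a translate of `B` recurs, division by one group element yields a sequence stabilizing both `A`
and `B`. Otherwise it remains to see that the translates of `B` come close to `p`, which is clear
if `A ∩ B` has a point other than `n`. If `A ∩ B = {n}`, a crossing sequence from `A` to `B`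
avoiding `n` shrinks to `p`: a recurring translate of a term through `p` would force that term to
contain `n`. -/

theorem exists_mem_ne_ne_of_two_lt_encard {α : Type*} {s : Set α} (hs : 2 < s.encard) (a b : α) :
    ∃ x ∈ s, x ≠ a ∧ x ≠ b := by
  have hpair : ({a, b} : Set α).encard ≤ 2 := by
    simpa [one_add_one_eq_two] using encard_insert_le {b} a
  obtain ⟨x, hx, hxab⟩ := not_subset.1 fun hsub : s ⊆ {a, b} =>
    hs.not_ge ((encard_le_encard hsub).trans hpair)
  simp only [mem_insert_iff, mem_singleton_iff, not_or] at hxab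
  exact ⟨x, hx, hxab⟩

theorem exists_strictMono_injective_comp {α : Type*} {u : ℕ → α}
    (hu : ∀ a, ∀ᶠ i in atTop, u i ≠ a) :
    ∃ k : ℕ → ℕ, StrictMono k ∧ Function.Injective (u ∘ k) := by
  obtain ⟨e, he⟩ := countable_iff_exists_injOn.1 (countable_range u)
  have hne : ∀ m, ∀ᶠ i in atTop, e (u i) ≠ m := by
    intro m
    by_cases hm : ∃ j, e (u j) = m
    · obtain ⟨j, rfl⟩ := hm
      exact (hu (u j)).mono fun i hi hij => hi (he (mem_range_self i) (mem_range_self j) hij)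
    · exact Eventually.of_forall fun i hi => hm ⟨i, hi⟩
  have hcofinite : Tendsto (e ∘ u) atTop cofinite := le_cofinite_iff_eventually_ne.2 hne
  obtain ⟨k, hk, hek⟩ := strictMono_subseq_of_tendsto_atTop (Nat.cofinite_eq_atTop ▸ hcofinite)
  exact ⟨k, hk, Function.Injective.of_comp (f := e) hek.injective⟩

section Approaches

variable {ι X : Type*} [TopologicalSpace X] {l : Filter ι} {S : ι → Set X} {p : X}

/-- The sets `S i` eventually meet every neighborhood of `p`, that is, `p` lies in their lower
Kuratowski limit. -/
def Approaches (S : ι → Set X) (l : Filter ι) (p : X) : Prop :=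
  ∀ V ∈ 𝓝 p, ∀ᶠ i in l, (S i ∩ V).Nonempty

theorem Approaches.of_tendsto {f : ι → X} (hf : Tendsto f l (𝓝 p)) (hS : ∀ i, f i ∈ S i) :
    Approaches S l p :=
  fun _ hV => (hf.eventually hV).mono fun i hi => ⟨f i, hS i, hi⟩

theorem Approaches.mem_of_isClosed [l.NeBot] {E : Set X} (h : Approaches (fun _ => E) l p)
    (hE : IsClosed E) : p ∈ E := by
  by_contra hp
  obtain ⟨_, _, hxE, hxE'⟩ := (h Eᶜ (hE.isOpen_compl.mem_nhds hp)).exists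
  exact hxE' hxE

theorem NullFam.tendsto_smallSets {X : Type*} [PseudoMetricSpace X] {𝓐 : Set (Set X)}
    (hnull : NullFam 𝓐) (hclosed : ∀ E ∈ 𝓐, IsClosed E) (hbdd : ∀ E ∈ 𝓐, Bornology.IsBounded E)
    {S : ι → Set X} (hS : ∀ i, S i ∈ 𝓐) {p : X} (happ : Approaches S l p)
    (hrec : ∀ F, p ∈ F → ¬ ∃ᶠ i in l, S i = F) : Tendsto S l (𝓝 p).smallSets := by
  refine (Metric.nhds_basis_ball.smallSets.tendsto_right_iff).2 fun ε hε => ?_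
  have hne : ∀ F ∈ {A ∈ 𝓐 | ε / 2 < Metric.diam A}, ∀ᶠ i in l, S i ≠ F := by
    rintro F ⟨hF, -⟩
    by_cases hpF : p ∈ F
    · exact not_frequently.1 (hrec F hpF)
    · filter_upwards [happ Fᶜ ((hclosed F hF).isOpen_compl.mem_nhds hpF)]
      rintro i ⟨x, hxS, hxF⟩ rfl
      exact hxF hxS
  filter_upwards [(eventually_all_finite (hnull (ε / 2) (half_pos hε))).2 hne,
    happ _ (Metric.ball_mem_nhds p (half_pos hε))] with i hlarge ⟨y, hyS, hyp⟩ x hxS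
  have hdiam : Metric.diam (S i) ≤ ε / 2 := not_lt.1 fun hlt => hlarge (S i) ⟨hS i, hlt⟩ rfl
  calc dist x p ≤ dist x y + dist y p := dist_triangle x y p
    _ < ε / 2 + ε / 2 := add_lt_add_of_le_of_lt
      ((Metric.dist_le_diam_of_mem (hbdd _ (hS i)) hxS hyS).trans hdiam) hyp
    _ = ε := add_halves ε

end Approaches

section Crossing

variable {X : Type*} [TopologicalSpace X] {𝓐 : Set (Set X)} {A B D : Set X}

theorem SepPts.inter_nonempty {E W : Set X} {x y : X} (h : SepPts E x y)
    (hW : IsPreconnected W) (hx : x ∈ W) (hy : y ∈ W) : (E ∩ W).Nonempty := by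
  by_contra hdisj
  have hWE : W ⊆ Eᶜ := fun z hzW hzE => hdisj ⟨z, hzE, hzW⟩
  exact h.2.2 (connectedComponentIn_eq (hW.subset_connectedComponentIn hx hWE hy))

theorem Crosses.symm (h : Crosses A B) : Crosses B A :=
  h.imp (fun hAB => inter_comm A B ▸ hAB) And.symm

theorem CrossSeqAvoiding.symm (h : CrossSeqAvoiding 𝓐 A B D) : CrossSeqAvoiding 𝓐 B A D := by
  obtain ⟨n, hn, c, hA, hB, hmem, hcross, hdisj⟩ := h
  refine ⟨n, hn, fun i => c (n + 1 - i), hB, by simpa using hA, fun i _ => hmem _ (by omega),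
    fun i hi => ?_, fun i hi hin => hdisj _ (by omega) (by omega)⟩
  have hnext : n + 1 - i = n + 1 - (i + 1) + 1 := by omega
  simpa only [hnext] using (hcross (n + 1 - (i + 1)) (by omega)).symm

theorem CrossSeqAvoiding.exists_last (h : CrossSeqAvoiding 𝓐 A B D) {P : Set X → Prop}
    (hfirst : ∀ E ∈ 𝓐, Disjoint E D → Crosses A E → P E)
    (hstep : ∀ E, P E → ∀ F ∈ 𝓐, Disjoint F D → Crosses E F → P F) :
    ∃ E ∈ 𝓐, Disjoint E D ∧ Crosses E B ∧ P E := by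
  obtain ⟨n, hn, c, rfl, rfl, hmem, hcross, hdisj⟩ := h
  have hcD : ∀ j, 1 ≤ j → j ≤ n → Disjoint (c j) D := fun j h1 hj =>
    disjoint_iff_inter_eq_empty.2 (hdisj j h1 hj)
  have hP : ∀ j, 1 ≤ j → j ≤ n → P (c j) := by
    intro j hj
    induction j, hj using Nat.le_induction with
    | base => exact fun h1 => hfirst _ (hmem 1 (by omega)) (hcD 1 le_rfl h1) (hcross 0 (by omega))
    | succ j hj ih =>
      exact fun hjn => hstep _ (ih (by omega)) _ (hmem _ (by omega)) (hcD _ (by omega) hjn)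
        (hcross j (by omega))
  exact ⟨c n, hmem n (by omega), hcD n hn le_rfl, hcross n le_rfl, hP n hn le_rfl⟩

end Crossing

section Stabilizer

variable {G X : Type*} [Group G] [MulAction G X] {A O V : Set X} {γ : G}

theorem smul_mem_of_mem_stabilizer (hγ : γ ∈ MulAction.stabilizer G A) {x : X} (hx : x ∈ A) :
    γ • x ∈ A :=
  (MulAction.mem_stabilizer_set.1 hγ x).2 hx

theorem inter_mem_stabilizer {B : Set X} (hA : γ ∈ MulAction.stabilizer G A)
    (hB : γ ∈ MulAction.stabilizer G B) : γ ∈ MulAction.stabilizer G (A ∩ B) := by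
  rw [MulAction.mem_stabilizer_iff] at hA hB ⊢
  rw [smul_set_inter, hA, hB]

theorem smul_eq_of_inter_eq_singleton {B : Set X} {c : X} (h : A ∩ B = {c})
    (hA : γ ∈ MulAction.stabilizer G A) (hB : γ ∈ MulAction.stabilizer G B) : γ • c = c :=
  h.subset (smul_mem_of_mem_stabilizer (inter_mem_stabilizer hA hB) (h.superset rfl))

theorem not_frequently_smul_eq_of_disjoint {ι : Type*} {l : Filter ι} {g : ι → G} {E D : Set X}
    {p : X} (hED : Disjoint E D) (hp : ∀ i, (g i)⁻¹ • p ∈ D) (F : Set X) (hpF : p ∈ F) :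
    ¬ ∃ᶠ i in l, g i • E = F := by
  intro hF
  obtain ⟨i, rfl⟩ := hF.exists
  exact disjoint_left.1 hED (mem_smul_set_iff_inv_smul_mem.1 hpF) (hp i)

theorem mapsTo_inv_smul_diff (hγ : γ ∈ MulAction.stabilizer G A)
    (h : MapsTo (γ • ·) (A \ O) V) : MapsTo (γ⁻¹ • ·) (A \ V) O := by
  rintro x ⟨hxA, hxV⟩
  by_contra hxO
  have := h ⟨smul_mem_of_mem_stabilizer (inv_mem hγ) hxA, hxO⟩
  exact hxV (by simpa using this)

theorem mapsTo_pow_smul_diff (hγ : γ ∈ MulAction.stabilizer G A) (hOV : Disjoint O V)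
    (h : MapsTo (γ • ·) (A \ O) V) {m : ℕ} (hm : m ≠ 0) : MapsTo (γ ^ m • ·) (A \ O) V := by
  have hself : MapsTo (γ • ·) (A \ O) (A \ O) := fun x hx =>
    ⟨smul_mem_of_mem_stabilizer hγ hx.1, fun hO => disjoint_left.1 hOV hO (h hx)⟩
  obtain ⟨m, rfl⟩ := Nat.exists_eq_succ_of_ne_zero hm
  rw [← smul_iterate, Function.iterate_succ']
  exact h.comp (hself.iterate m)

theorem injective_pow_of_mapsTo (hγ : γ ∈ MulAction.stabilizer G A) (hOV : Disjoint O V)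
    (h : MapsTo (γ • ·) (A \ O) V) {z : X} (hz : z ∈ A \ O) (hzV : z ∉ V) :
    Function.Injective fun m : ℕ => γ ^ m := by
  rw [injective_pow_iff_not_isOfFinOrder, isOfFinOrder_iff_pow_eq_one]
  rintro ⟨m, hm, hγm⟩
  have := mapsTo_pow_smul_diff hγ hOV h hm.ne' hz
  exact hzV (by simpa [hγm] using this)

end Stabilizer

section ConvergesOn

variable {G X : Type*} [Group G] [MulAction G X] [TopologicalSpace X]
  {g : ℕ → G} {A E : Set X} {n p x : X}

/-- The translates by `g i` of every compact subset of `A \ {n}` shrink to `p`. Unlike in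
`ConvSeqOn`, the points `n` and `p` need not lie in `A`. -/
def AttractsOn (g : ℕ → G) (A : Set X) (n p : X) : Prop :=
  ∀ C ⊆ A, IsCompact C → n ∉ C → Tendsto (fun i => g i • C) atTop (𝓝 p).smallSets

/-- The sequence `g` in the stabilizer of `A` acts as a convergence sequence on `A` with repeller
`n` and attractor `p`. -/
structure ConvergesOn (g : ℕ → G) (A : Set X) (n p : X) : Prop where
  mem_stabilizer : ∀ i, g i ∈ MulAction.stabilizer G A
  repeller_mem : n ∈ A
  attractor_mem : p ∈ A
  attractsOn : AttractsOn g A n p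

theorem AttractsOn.const_mul [ContinuousConstSMul G X] (h : AttractsOn g A n p) (γ : G) :
    AttractsOn (fun i => γ * g i) A n (γ • p) := by
  intro C hC hCc hn
  simp only [mul_smul]
  exact (tendsto_id.const_smul γ : Tendsto _ _ (𝓝 (γ • p))).image_smallSets.comp (h C hC hCc hn)

theorem ConvSeqOn.convergesOn (h : ConvSeqOn A (fun i (x : X) => g i • x) n p)
    (hg : ∀ i, g i ∈ stab G A) : ConvergesOn g A n p :=
  ⟨hg, h.1, h.2.1, fun C hC hCc hn => (nhds_basis_opens p).smallSets.tendsto_right_iff.2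
    fun U hU => h.2.2 C hC hCc hn U hU.2 hU.1⟩

theorem ConvGroupOn.exists_convergesOn (h : ConvGroupOn (stab G A) A)
    (hg : ∀ i, g i ∈ MulAction.stabilizer G A) (hinj : Function.Injective g) :
    ∃ k : ℕ → ℕ, StrictMono k ∧ ∃ n p, ConvergesOn (g ∘ k) A n p := by
  obtain ⟨k, hk, n, p, hconv⟩ := h g hg hinj
  exact ⟨k, hk, n, p, ConvSeqOn.convergesOn hconv fun i => hg (k i)⟩

namespace ConvergesOn

theorem comp (h : ConvergesOn g A n p) {k : ℕ → ℕ} (hk : StrictMono k) :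
    ConvergesOn (g ∘ k) A n p :=
  ⟨fun i => h.mem_stabilizer (k i), h.repeller_mem, h.attractor_mem,
    fun C hC hCc hn => (h.attractsOn C hC hCc hn).comp hk.tendsto_atTop⟩

theorem const_mul [ContinuousConstSMul G X] (h : ConvergesOn g A n p) {γ : G}
    (hγ : γ ∈ MulAction.stabilizer G A) : ConvergesOn (fun i => γ * g i) A n (γ • p) :=
  ⟨fun i => mul_mem hγ (h.mem_stabilizer i), h.repeller_mem,
    smul_mem_of_mem_stabilizer hγ h.attractor_mem, h.attractsOn.const_mul γ⟩

theorem tendsto_smul (h : ConvergesOn g A n p) (hx : x ∈ A) (hxn : x ≠ n) :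
    Tendsto (fun i => g i • x) atTop (𝓝 p) :=
  (h.attractsOn {x} (singleton_subset_iff.2 hx) isCompact_singleton hxn.symm).of_smallSets
    (Eventually.of_forall fun _ => smul_mem_smul_set rfl)

theorem attractor_eq_of_smul_eq [T2Space X] (h : ConvergesOn g A n p) (hx : x ∈ A) (hxn : x ≠ n)
    (hfix : ∀ i, g i • x = x) : p = x :=
  tendsto_nhds_unique (h.tendsto_smul hx hxn) (by simp only [hfix, tendsto_const_nhds])

theorem attractor_mem_of_nontrivial (h : ConvergesOn g A n p) {S : Set X} (hS : S.Nontrivial)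
    (hSA : S ⊆ A) (hclosed : IsClosed S) (hstab : ∀ i, g i ∈ MulAction.stabilizer G S) : p ∈ S := by
  obtain ⟨x, hx, hxn⟩ := hS.exists_ne n
  exact hclosed.mem_of_tendsto (h.tendsto_smul (hSA hx) hxn)
    (Eventually.of_forall fun i => smul_mem_of_mem_stabilizer (hstab i) hx)

theorem inv [T2Space X] (h : ConvergesOn g A n p) (hA : IsCompact A) : ConvergesOn g⁻¹ A p n := by
  refine ⟨fun i => inv_mem (h.mem_stabilizer i), h.attractor_mem, h.repeller_mem, ?_⟩
  refine fun C hC hCc hp => (nhds_basis_opens n).smallSets.tendsto_right_iff.2 fun U hU => ?_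
  have hAU := h.attractsOn (A \ U) sdiff_subset (hA.diff hU.2) fun hn => hn.2 hU.1
  filter_upwards [tendsto_smallSets_iff.1 hAU Cᶜ (hCc.isClosed.isOpen_compl.mem_nhds hp)] with i hi
  rintro _ ⟨x, hx, rfl⟩
  exact mapsTo_inv_smul_diff (h.mem_stabilizer i) (mapsTo_iff_image_subset.2 hi)
    ⟨hC hx, not_not_intro hx⟩

theorem smul_attractor_eq [T2Space X] [ContinuousConstSMul G X] (h : ConvergesOn g A n p)
    (hcard : 2 < A.encard) {γ : G} (hγ : γ ∈ MulAction.stabilizer G A)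
    (hcomm : ∀ i, Commute γ (g i)) : γ • p = p := by
  obtain ⟨x, hx, hxn, hγx⟩ := exists_mem_ne_ne_of_two_lt_encard hcard n (γ⁻¹ • n)
  have hlim := h.tendsto_smul (smul_mem_of_mem_stabilizer hγ hx) fun hn => hγx (hn ▸ by simp)
  simp only [smul_smul, ← (hcomm _).eq] at hlim
  simp only [mul_smul] at hlim
  exact tendsto_nhds_unique ((h.tendsto_smul hx hxn).const_smul γ) hlim

theorem accPt_repeller [T2Space X] (h : ConvergesOn g A n p) (hA : IsCompact A)
    (hcard : 2 < A.encard) : AccPt n (𝓟 A) := by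
  refine accPt_iff_nhds.2 fun U hU => ?_
  obtain ⟨x, hx, hxp, -⟩ := exists_mem_ne_ne_of_two_lt_encard hcard p p
  obtain ⟨y, hy, hyp, hyx⟩ := exists_mem_ne_ne_of_two_lt_encard hcard p x
  obtain ⟨i, hxU, hyU⟩ := (((h.inv hA).tendsto_smul hx hxp).eventually hU |>.and
    (((h.inv hA).tendsto_smul hy hyp).eventually hU)).exists
  have hmem {z : X} (hz : z ∈ A) : (g i)⁻¹ • z ∈ A :=
    smul_mem_of_mem_stabilizer (inv_mem (h.mem_stabilizer i)) hz
  by_contra! hn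
  have hxn := hn _ ⟨hxU, hmem hx⟩
  have hyn := hn _ ⟨hyU, hmem hy⟩
  exact hyx (smul_left_cancel _ (hyn.trans hxn.symm))

theorem eventually_ne [T2Space X] (h : ConvergesOn g A n p) (hcard : 2 < A.encard) (γ : G) :
    ∀ᶠ i in atTop, g i ≠ γ := by
  by_contra hfreq
  obtain ⟨x, hx, hxn, -⟩ := exists_mem_ne_ne_of_two_lt_encard hcard n n
  obtain ⟨y, hy, hyn, hyx⟩ := exists_mem_ne_ne_of_two_lt_encard hcard n x
  have hγ {z : X} (hz : z ∈ A) (hzn : z ≠ n) : γ • z = p := by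
    by_contra hne
    refine hfreq (((h.tendsto_smul hz hzn).eventually_ne (Ne.symm hne)).mono ?_)
    rintro i hi rfl
    exact hi rfl
  exact hyx (smul_left_cancel γ ((hγ hy hyn).trans (hγ hx hxn).symm))

end ConvergesOn

section Approaches

variable [ContinuousConstSMul G X] [LocallyConnectedSpace X]

theorem SepPts.approaches_smul {ι : Type*} {l : Filter ι} {g : ι → G} {x y : X} (h : SepPts E x y)
    (hx : Tendsto (fun i => g i • x) l (𝓝 p)) (hy : Tendsto (fun i => g i • y) l (𝓝 p)) :
    Approaches (fun i => g i • E) l p := by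
  intro V hV
  obtain ⟨W, hWV, hW, hpW, hWconn⟩ :=
    locallyConnectedSpace_iff_subsets_isOpen_isConnected.1 ‹_› p V hV
  filter_upwards [hx.eventually (hW.mem_nhds hpW), hy.eventually (hW.mem_nhds hpW)] with i hxW hyW
  have hpre : IsPreconnected ((g i)⁻¹ • W) :=
    hWconn.isPreconnected.image _ (continuous_const_smul _).continuousOn
  obtain ⟨z, hzE, hzW⟩ := h.inter_nonempty hpre (mem_inv_smul_set_iff.2 hxW)
    (mem_inv_smul_set_iff.2 hyW)
  exact ⟨g i • z, smul_mem_smul_set hzE, hWV (mem_inv_smul_set_iff.1 hzW)⟩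

theorem Crosses.approaches_smul {ι : Type*} {l : Filter ι} {g : ι → G} {F : Set X}
    (hEF : Crosses E F) (hE : Tendsto (fun i => g i • E) l (𝓝 p).smallSets) :
    Approaches (fun i => g i • F) l p := by
  have hlim {x : X} (hx : x ∈ E) : Tendsto (fun i => g i • x) l (𝓝 p) :=
    hE.of_smallSets (Eventually.of_forall fun _ => smul_mem_smul_set hx)
  obtain ⟨x, hxE, hxF⟩ | ⟨-, hEF, x, hx, y, hy, hxy⟩ := hEF
  · exact .of_tendsto (hlim hxE) fun _ => smul_mem_smul_set hxF
  · exact SepPts.approaches_smul ⟨hEF hx, hEF hy, hxy⟩ (hlim hx) (hlim hy)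

theorem ConvergesOn.approaches_of_crosses [T2Space X] (h : ConvergesOn g A n p) (hA : IsCompact A)
    (hcard : 2 < A.encard) (hE : IsClosed E) (hAE : Crosses A E) (hn : n ∉ E) :
    Approaches (fun i => g i • E) atTop p := by
  obtain ⟨x, hxA, hxE⟩ | ⟨-, hAE, x, hx, y, hy, hxy⟩ := hAE
  · exact .of_tendsto (h.tendsto_smul hxA (ne_of_mem_of_not_mem hxE hn))
      fun _ => smul_mem_smul_set hxE
  -- The repeller is not isolated, so it can be replaced by another point of its component.
  have hmove : ∀ x ∈ A, ∃ x' ∈ A, x' ≠ n ∧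
      connectedComponentIn Eᶜ x' = connectedComponentIn Eᶜ x := by
    intro x hx
    obtain rfl | hxn := eq_or_ne x n
    · obtain ⟨z, ⟨hzx, hzA⟩, hzn⟩ := accPt_iff_nhds.1 (h.accPt_repeller hA hcard) _
        (hE.isOpen_compl.connectedComponentIn.mem_nhds (mem_connectedComponentIn hn))
      exact ⟨z, hzA, hzn, (connectedComponentIn_eq hzx).symm⟩
    · exact ⟨x, hx, hxn, rfl⟩
  obtain ⟨x', hx', hxn, hxx'⟩ := hmove x hx
  obtain ⟨y', hy', hyn, hyy'⟩ := hmove y hy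
  exact SepPts.approaches_smul ⟨hAE hx', hAE hy', by rwa [hxx', hyy']⟩
    (h.tendsto_smul hx' hxn) (h.tendsto_smul hy' hyn)

end Approaches

section Loxodromic

variable [T2Space X] {O V : Set X} {c z : X}

theorem ConvergesOn.repeller_ne_of_mapsTo (h : ConvergesOn g A n p) (hA : IsCompact A)
    (hV : IsOpen V) (hOV : Disjoint O V) (hc : c ∈ V) (hz : z ∈ A \ O) (hzV : z ∉ closure V)
    (hmaps : ∀ᶠ i in atTop, MapsTo (g i • ·) (A \ O) V) : n ≠ c := by
  rintro rfl
  have hp : p ∈ closure V := mem_closure_of_tendsto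
    (h.tendsto_smul hz.1 fun hzn => hzV (subset_closure (hzn ▸ hc)))
    (hmaps.mono fun i hi => hi hz)
  have hn : n ∈ closure O := mem_closure_of_tendsto
    ((h.inv hA).tendsto_smul hz.1 fun hzp => hzV (hzp ▸ hp))
    (hmaps.mono fun i hi => mapsTo_inv_smul_diff (h.mem_stabilizer i) hi
      ⟨hz.1, fun hzV' => hzV (subset_closure hzV')⟩)
  exact disjoint_left.1 (hOV.closure_left hV) hn hc

variable [ContinuousConstSMul G X]

theorem ConvGroupOn.exists_pow_convergesOn_of_mapsTo (hG : ConvGroupOn (stab G A) A)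
    (hA : IsCompact A) (hcard : 2 < A.encard) {γ : G} (hγ : γ ∈ MulAction.stabilizer G A)
    (hV : IsOpen V) (hOV : Disjoint O V) (hmaps : MapsTo (γ • ·) (A \ O) V)
    (hcA : c ∈ A) (hcV : c ∈ V) (hγc : γ • c = c) (hz : z ∈ A \ O) (hzV : z ∉ closure V) :
    ∃ (m : ℕ → ℕ) (r : X), r ≠ c ∧ γ • r = r ∧ ConvergesOn (fun i => γ ^ m i) A r c := by
  obtain ⟨m, hm, r, a, hr⟩ := hG.exists_convergesOn (fun m => pow_mem hγ m)
    (injective_pow_of_mapsTo hγ hOV hmaps hz fun h => hzV (subset_closure h))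
  have hrc : r ≠ c := hr.repeller_ne_of_mapsTo hA hV hOV hcV hz hzV
    ((hm.tendsto_atTop.eventually_ne_atTop 0).mono fun i hi => mapsTo_pow_smul_diff hγ hOV hmaps hi)
  obtain rfl : a = c := hr.attractor_eq_of_smul_eq hcA hrc.symm fun i =>
    pow_mem (S := MulAction.stabilizer G c) hγc (m i)
  have hγr : γ • r = r := (hr.inv hA).smul_attractor_eq hcard hγ fun i =>
    ((Commute.refl γ).pow_right (m i)).inv_right
  exact ⟨m, r, hrc, hγr, hr⟩

-- Ping-pong: a term with large index maps the complement of a neighborhood of `n` close to `c`.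
theorem ConvGroupOn.exists_pow_convergesOn (hG : ConvGroupOn (stab G A) A) (hA : IsCompact A)
    (hcard : 2 < A.encard) (hg : ConvergesOn g A n c) (hfix : ∀ i, g i • c = c) (hnc : n ≠ c) :
    ∃ (i : ℕ) (m : ℕ → ℕ) (r : X), r ≠ c ∧ g i • r = r ∧
      ConvergesOn (fun j => g i ^ m j) A r c := by
  obtain ⟨z, hz, hzn, hzc⟩ := exists_mem_ne_ne_of_two_lt_encard hcard n c
  obtain ⟨U, hU, hdisj⟩ := (toFinite {n, c, z}).t2_separation
  have hUnc : Disjoint (U n) (U c) := hdisj (by simp) (by simp) hnc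
  have hUzn : Disjoint (U z) (U n) := hdisj (by simp) (by simp) hzn
  have hUzc : Disjoint (U z) (U c) := hdisj (by simp) (by simp) hzc
  have hshrink := hg.attractsOn (A \ U n) sdiff_subset (hA.diff (hU n).2) fun hn => hn.2 (hU n).1
  obtain ⟨i, hi⟩ := (tendsto_smallSets_iff.1 hshrink (U c) ((hU c).2.mem_nhds (hU c).1)).exists
  exact ⟨i, hG.exists_pow_convergesOn_of_mapsTo hA hcard (hg.mem_stabilizer i) (hU c).2 hUnc
    (mapsTo_iff_image_subset.2 hi) hg.attractor_mem (hU c).1 (hfix i)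
    ⟨hz, disjoint_left.1 hUzn (hU z).1⟩ (disjoint_left.1 (hUzc.closure_right (hU z).2) (hU z).1)⟩

end Loxodromic

end ConvergesOn

/-- A local convergence pairing without fineness, for a space that need not be compact: only the
members of `𝓐` are compact. The crossing condition is imposed only on members that intersect, and
its two cases, `A ∩ B` a singleton or a pair, are separate fields. -/
structure IsWeakLocalConvPairing (G : Type*) {X : Type*} [Group G] [MulAction G X] [MetricSpace X]
    (𝓐 : Set (Set X)) : Prop where
  isCompact : ∀ A ∈ 𝓐, IsCompact A
  smul_mem : ∀ g : G, ∀ A ∈ 𝓐, g • A ∈ 𝓐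
  two_lt_encard : ∀ A ∈ 𝓐, 2 < A.encard
  nullFam : NullFam 𝓐
  convGroupOn : ∀ A ∈ 𝓐, ConvGroupOn (stab G A) A
  crossSeqAvoiding_pair : ∀ A ∈ 𝓐, ∀ B ∈ 𝓐, ∀ c, A ∩ B = {c} → ∀ b ∈ B, b ≠ c →
    CrossSeqAvoiding 𝓐 A B {b, c}
  crossSeqAvoiding_inter : ∀ A ∈ 𝓐, ∀ B ∈ 𝓐, (A ∩ B).encard = 2 → CrossSeqAvoiding 𝓐 A B (A ∩ B)

theorem IsLocalConvPairing.isWeakLocalConvPairing {G X : Type*} [Group G] [MulAction G X]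
    [MetricSpace X] [CompactSpace X] {𝓐 : Set (Set X)} (h : IsLocalConvPairing G 𝓐) :
    IsWeakLocalConvPairing G 𝓐 where
  isCompact A hA := (h.closed A hA).isCompact
  smul_mem := h.invariant
  two_lt_encard := h.big
  nullFam := h.null
  convGroupOn := h.stabConv
  crossSeqAvoiding_pair A hA B hB c hc := (h.connect A hA B hB (by simp [hc])).1 c hc
  crossSeqAvoiding_inter A hA B hB hAB := by
    refine (h.connect A hA B hB hAB.le).2 ?_
    rintro ⟨c, hc⟩
    simp [hc] at hAB

namespace IsWeakLocalConvPairing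

variable {G X : Type*} [Group G] [MulAction G X] [MetricSpace X]
  {𝓐 : Set (Set X)} {A B D E : Set X} {g : ℕ → G} {n p n' p' c : X}

theorem tendsto_smallSets (h : IsWeakLocalConvPairing G 𝓐) (hE : E ∈ 𝓐)
    (happ : Approaches (fun i => g i • E) atTop p)
    (hrec : ∀ F, p ∈ F → ¬ ∃ᶠ i in atTop, g i • E = F) :
    Tendsto (fun i => g i • E) atTop (𝓝 p).smallSets :=
  h.nullFam.tendsto_smallSets (fun F hF => (h.isCompact F hF).isClosed)
    (fun F hF => (h.isCompact F hF).isBounded) (fun i => h.smul_mem (g i) E hE) happ hrec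

variable [LocallyConnectedSpace X] [ContinuousConstSMul G X]

theorem exists_tendsto_smallSets (h : IsWeakLocalConvPairing G 𝓐) (hA : A ∈ 𝓐)
    (hg : ConvergesOn g A n p) (hseq : CrossSeqAvoiding 𝓐 A B D) (hn : n ∈ D)
    (hrec : ∀ E ∈ 𝓐, Disjoint E D → ∀ F, p ∈ F → ¬ ∃ᶠ i in atTop, g i • E = F) :
    ∃ E ∈ 𝓐, Disjoint E D ∧ Crosses E B ∧ Tendsto (fun i => g i • E) atTop (𝓝 p).smallSets :=
  hseq.exists_last
    (fun E hE hED hAE => h.tendsto_smallSets hE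
      (hg.approaches_of_crosses (h.isCompact A hA) (h.two_lt_encard A hA)
        (h.isCompact E hE).isClosed hAE fun hnE => disjoint_left.1 hED hnE hn)
      (hrec E hE hED))
    fun _ hE F hF hFD hEF => h.tendsto_smallSets hF (hEF.approaches_smul hE) (hrec F hF hFD)

theorem repeller_eq_of_inter_eq_singleton (h : IsWeakLocalConvPairing G 𝓐) (hA : A ∈ 𝓐)
    (hB : B ∈ 𝓐) (hAB : A ∩ B = {c}) (hgA : ∀ i, g i ∈ MulAction.stabilizer G A)
    (hg : ConvergesOn g B n c) : n = c := by
  by_contra hnc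
  obtain ⟨i, m, r, hrc, hfix, hr⟩ := (h.convGroupOn B hB).exists_pow_convergesOn
    (h.isCompact B hB) (h.two_lt_encard B hB) hg
    (fun i => smul_eq_of_inter_eq_singleton hAB (hgA i) (hg.mem_stabilizer i)) hnc
  have hpow (j : ℕ) : g i ^ m j • r = r := pow_mem (S := MulAction.stabilizer G r) hfix (m j)
  obtain ⟨E, -, -, hEA, hE⟩ := h.exists_tendsto_smallSets hB (hr.inv (h.isCompact B hB))
    (h.crossSeqAvoiding_pair A hA B hB c hAB r hr.repeller_mem hrc).symm (by simp)
    fun E _ hED => not_frequently_smul_eq_of_disjoint hED fun j => by simp [hpow]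
  have hrA : r ∈ A := by
    refine Approaches.mem_of_isClosed (l := atTop (α := ℕ)) ?_ (h.isCompact A hA).isClosed
    convert hEA.approaches_smul hE with j
    exact (inv_mem (pow_mem (hgA i) (m j))).symm
  exact hrc (hAB.subset ⟨hrA, hr.repeller_mem⟩)

theorem attractor_eq_of_inter_eq_singleton (h : IsWeakLocalConvPairing G 𝓐) (hA : A ∈ 𝓐)
    (hB : B ∈ 𝓐) (hAB : A ∩ B = {c}) (hgA : ∀ i, g i ∈ MulAction.stabilizer G A)
    (hg : ConvergesOn g B n p) : p = c := by
  obtain rfl | hcn := eq_or_ne c n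
  · exact h.repeller_eq_of_inter_eq_singleton hA hB hAB (fun i => inv_mem (hgA i))
      (hg.inv (h.isCompact B hB))
  · exact hg.attractor_eq_of_smul_eq (hAB.superset rfl).2 hcn
      fun i => smul_eq_of_inter_eq_singleton hAB (hgA i) (hg.mem_stabilizer i)

theorem attractor_eq_of_encard_inter_eq_two (h : IsWeakLocalConvPairing G 𝓐) (hA : A ∈ 𝓐)
    (hB : B ∈ 𝓐) (hAB : (A ∩ B).encard = 2) (hgA : ConvergesOn g A n p)
    (hgB : ConvergesOn g B n' p') : p = p' := by
  have hAc := h.isCompact A hA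
  have hBc := h.isCompact B hB
  have hnontrivial : (A ∩ B).Nontrivial := one_lt_encard_iff_nontrivial.1 (by simp [hAB])
  have hclosed : IsClosed (A ∩ B) := hAc.isClosed.inter hBc.isClosed
  have hstab (i : ℕ) : g i ∈ MulAction.stabilizer G (A ∩ B) :=
    inter_mem_stabilizer (hgA.mem_stabilizer i) (hgB.mem_stabilizer i)
  have hp : p ∈ A ∩ B :=
    hgA.attractor_mem_of_nontrivial hnontrivial inter_subset_left hclosed hstab
  have hp' : p' ∈ A ∩ B :=
    hgB.attractor_mem_of_nontrivial hnontrivial inter_subset_right hclosed hstab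
  have hn : n ∈ A ∩ B := (hgA.inv hAc).attractor_mem_of_nontrivial hnontrivial inter_subset_left
    hclosed fun i => inv_mem (hstab i)
  have hn' : n' ∈ A ∩ B := (hgB.inv hBc).attractor_mem_of_nontrivial hnontrivial
    inter_subset_right hclosed fun i => inv_mem (hstab i)
  have hrec {q : X} (hq : q ∈ A ∩ B) (E : Set X) (hE : Disjoint E (A ∩ B)) :=
    not_frequently_smul_eq_of_disjoint (l := atTop) hE fun i =>
      smul_mem_of_mem_stabilizer (inv_mem (hstab i)) hq
  obtain ⟨E, hE, hEAB, hEB, hEp⟩ := h.exists_tendsto_smallSets hA hgA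
    (h.crossSeqAvoiding_inter A hA B hB hAB) hn fun E _ => hrec hp E
  have hEp' : Tendsto (fun i => g i • E) atTop (𝓝 p').smallSets :=
    h.tendsto_smallSets hE (hgB.approaches_of_crosses hBc (h.two_lt_encard B hB)
      (h.isCompact E hE).isClosed hEB.symm fun hnE => disjoint_left.1 hEAB hnE hn')
      (hrec hp' E hEAB)
  obtain ⟨x, hx⟩ : E.Nonempty := encard_pos.1 (zero_le_two.trans_lt (h.two_lt_encard E hE))
  have hgx : ∀ᶠ i in atTop, g i • x ∈ g i • E := Eventually.of_forall fun i => smul_mem_smul_set hx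
  exact tendsto_nhds_unique (hEp.of_smallSets hgx) (hEp'.of_smallSets hgx)

theorem attractor_eq (h : IsWeakLocalConvPairing G 𝓐) (hA : A ∈ 𝓐) (hB : B ∈ 𝓐)
    (hAB : (A ∩ B).Nonempty) (hgA : ConvergesOn g A n p) (hgB : ConvergesOn g B n' p') :
    p = p' := by
  obtain hsub | hnontrivial := (A ∩ B).subsingleton_or_nontrivial
  · obtain ⟨c, hc⟩ := exists_eq_singleton_iff_nonempty_subsingleton.2 ⟨hAB, hsub⟩
    rw [h.attractor_eq_of_inter_eq_singleton hA hB hc hgA.mem_stabilizer hgB,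
      h.attractor_eq_of_inter_eq_singleton hB hA (inter_comm A B ▸ hc) hgB.mem_stabilizer hgA]
  · have htwo : 2 ≤ (A ∩ B).encard := by
      simpa only [one_add_one_eq_two] using
        Order.add_one_le_of_lt (one_lt_encard_iff_nontrivial.2 hnontrivial)
    obtain htwo | hlt := htwo.eq_or_lt
    · exact h.attractor_eq_of_encard_inter_eq_two hA hB htwo.symm hgA hgB
    · obtain ⟨x, hx, hxn, hxn'⟩ := exists_mem_ne_ne_of_two_lt_encard hlt n n'
      exact tendsto_nhds_unique (hgA.tendsto_smul hx.1 hxn) (hgB.tendsto_smul hx.2 hxn')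

theorem exists_comp_convergesOn (h : IsWeakLocalConvPairing G 𝓐) (hA : A ∈ 𝓐) (hB : B ∈ 𝓐)
    (hAB : (A ∩ B).Nonempty) (hgA : ConvergesOn g A n p)
    (hgB : ∀ i, g i ∈ MulAction.stabilizer G B) :
    ∃ k : ℕ → ℕ, StrictMono k ∧ ConvergesOn (g ∘ k) B n p := by
  obtain ⟨k, hk, hinj⟩ :=
    exists_strictMono_injective_comp (hgA.eventually_ne (h.two_lt_encard A hA))
  obtain ⟨m, hm, n', p', hlim⟩ :=
    (h.convGroupOn B hB).exists_convergesOn (fun i => hgB (k i)) hinj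
  have hgA' : ConvergesOn (g ∘ k ∘ m) A n p := hgA.comp (hk.comp hm)
  obtain rfl := h.attractor_eq hA hB hAB hgA' hlim
  obtain rfl := h.attractor_eq hA hB hAB (hgA'.inv (h.isCompact A hA)) (hlim.inv (h.isCompact B hB))
  exact ⟨k ∘ m, hk.comp hm, hlim⟩

theorem exists_attractsOn_of_frequently_smul_eq (h : IsWeakLocalConvPairing G 𝓐) (hA : A ∈ 𝓐)
    (hB : B ∈ 𝓐) (hAB : (A ∩ B).Nonempty) (hg : ConvergesOn g A n p) {F : Set X}
    (hF : ∃ᶠ i in atTop, g i • B = F) :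
    n ∈ B ∧ ∃ k : ℕ → ℕ, StrictMono k ∧ AttractsOn (g ∘ k) B n p := by
  obtain ⟨φ, hφ, hφF⟩ := extraction_of_frequently_atTop hF
  have hstab (i : ℕ) : (g (φ 0))⁻¹ * g (φ i) ∈ MulAction.stabilizer G B := by
    rw [MulAction.mem_stabilizer_iff, mul_smul, hφF, ← hφF 0, inv_smul_smul]
  obtain ⟨k, hk, hlim⟩ := h.exists_comp_convergesOn hA hB hAB
    ((hg.comp hφ).const_mul (inv_mem (hg.mem_stabilizer (φ 0)))) hstab
  refine ⟨hlim.repeller_mem, φ ∘ k, hφ.comp hk, ?_⟩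
  simpa [Function.comp_def] using hlim.attractsOn.const_mul (g (φ 0))

theorem approaches_smul_of_inter_nonempty (h : IsWeakLocalConvPairing G 𝓐) (hA : A ∈ 𝓐)
    (hB : B ∈ 𝓐) (hAB : (A ∩ B).Nonempty) (hg : ConvergesOn g A n p) :
    Approaches (fun i => g i • B) atTop p := by
  by_cases hne : ∃ x ∈ A ∩ B, x ≠ n
  · obtain ⟨x, ⟨hxA, hxB⟩, hxn⟩ := hne
    exact .of_tendsto (hg.tendsto_smul hxA hxn) fun _ => smul_mem_smul_set hxB
  push Not at hne
  have hAn : A ∩ B = {n} := eq_singleton_iff_nonempty_unique_mem.2 ⟨hAB, hne⟩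
  obtain ⟨b, hb, hbn, -⟩ := exists_mem_ne_ne_of_two_lt_encard (h.two_lt_encard B hB) n n
  obtain ⟨E, -, -, hEB, hE⟩ := h.exists_tendsto_smallSets hA hg
    (h.crossSeqAvoiding_pair A hA B hB n hAn b hb hbn) (by simp) fun E hE hED F hpF hF => by
      obtain ⟨i, rfl⟩ := hF.exists
      have hAE : (A ∩ E).Nonempty := ⟨(g i)⁻¹ • p,
        smul_mem_of_mem_stabilizer (inv_mem (hg.mem_stabilizer i)) hg.attractor_mem,
        mem_smul_set_iff_inv_smul_mem.1 hpF⟩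
      exact disjoint_left.1 hED (h.exists_attractsOn_of_frequently_smul_eq hA hE hAE hg hF).1
        (by simp)
  exact hEB.approaches_smul hE

theorem exists_attractsOn (h : IsWeakLocalConvPairing G 𝓐) (hA : A ∈ 𝓐) (hB : B ∈ 𝓐)
    (hAB : (A ∩ B).Nonempty) (hg : ConvergesOn g A n p) :
    ∃ k : ℕ → ℕ, StrictMono k ∧ AttractsOn (g ∘ k) B n p := by
  by_cases hrec : ∃ F, p ∈ F ∧ ∃ᶠ i in atTop, g i • B = F
  · obtain ⟨F, -, hF⟩ := hrec
    exact (h.exists_attractsOn_of_frequently_smul_eq hA hB hAB hg hF).2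
  · have hB' := h.tendsto_smallSets hB (h.approaches_smul_of_inter_nonempty hA hB hAB hg)
      fun F hpF hF => hrec ⟨F, hpF, hF⟩
    refine ⟨id, strictMono_id, fun C hC _ _ => tendsto_smallSets_iff.2 fun U hU => ?_⟩
    exact (tendsto_smallSets_iff.1 hB' U hU).mono fun i hi => (smul_set_mono hC).trans hi

end IsWeakLocalConvPairing

theorem attract_adjacent_general {G X : Type*} [Group G] [MulAction G X]
    [MetricSpace X] [LocallyConnectedSpace X] [ContinuousConstSMul G X]
    (𝓐 : Set (Set X)) (h : IsWeakLocalConvPairing G 𝓐)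
    (A B : Set X) (hA : A ∈ 𝓐) (hB : B ∈ 𝓐) (hAB : (A ∩ B).Nonempty)
    (g : ℕ → G) (hg : ∀ i, g i ∈ stab G A) (n p : X)
    (hconv : ConvSeqOn A (fun i (x : X) => g i • x) n p) :
    ∃ k : ℕ → ℕ, StrictMono k ∧ ∀ C : Set X, C ⊆ B → IsCompact C → n ∉ C →
      ∀ U : Set X, IsOpen U → p ∈ U → ∀ᶠ i in atTop, g (k i) • C ⊆ U := by
  obtain ⟨k, hk, hattr⟩ := h.exists_attractsOn hA hB hAB (hconv.convergesOn hg)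
  exact ⟨k, hk, fun C hC hCc hn U hU hp =>
    tendsto_smallSets_iff.1 (hattr C hC hCc hn) U (hU.mem_nhds hp)⟩

/-- Lemma: if `(g_i) ⊆ st(A)` acts as a convergence sequence on `A` with attractor `p`
and repeller `n`, and `A ∩ B ≠ ∅`, then a subsequence attracts every compact subset of
`B \ {n}` to `p`. -/
theorem attract_adjacent {G X : Type*} [Group G] [MulAction G X]
    [MetricSpace X] [CompactSpace X] [ConnectedSpace X] [LocallyConnectedSpace X]
    [ContinuousConstSMul G X]
    (hcut : ∀ x : X, IsPreconnected ({x}ᶜ : Set X))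
    (𝓐 : Set (Set X)) (h : IsLocalConvPairing G 𝓐)
    (A B : Set X) (hA : A ∈ 𝓐) (hB : B ∈ 𝓐) (hAB : (A ∩ B).Nonempty)
    (g : ℕ → G) (hg : ∀ i, g i ∈ stab G A) (n p : X)
    (hconv : ConvSeqOn A (fun i (x : X) => g i • x) n p) :
    ∃ k : ℕ → ℕ, StrictMono k ∧ ∀ C : Set X, C ⊆ B → IsCompact C → n ∉ C →
      ∀ U : Set X, IsOpen U → p ∈ U → ∀ᶠ i in atTop, g (k i) • C ⊆ U :=
  attract_adjacent_general 𝓐 h.isWeakLocalConvPairing A B hA hB hAB g hg n p hconv
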